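/- Let Y be a nonempty finite set, let p : Y → ℝ be nonnegative with ∑_{y ∈ Y} p(y) = 1, and let f : Y → ℝ satisfy 0 < f(y) < 1 for all y. Set η := ∑_{y ∈ Y} p(y) f(y), and note η ∈ (0,1). Then ∑_{y ∈ Y} p(y)·[ ln(1 − f(y)) − ln(−ln f(y)) ] ≤ ln(1 − η) − ln(−ln η). -/

import Mathlib

/-!
The inequality is Jensen's inequality for `g x = log (1 - x) - log (-log x)`, so the point is that
`g` is concave on `(0, 1)`. With `L = -log x > 0` one has
`g'' x = (1 - L) / (x L)² - 1 / (1 - x)²`, hence concavity amounts to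
`(1 - L) (1 - x)² ≤ (x L)²`. This is clear for `L ≥ 1`. For `L < 1`, the classical bound
`2 (1 - x) / (1 + x) ≤ L` rearranges to `(1 - x) (2 - L) ≤ 2 x L`; squaring it and using
`4 (1 - L) ≤ (2 - L)²` gives the claim.
-/

/-- The sign of the second derivative of `log (1 - x) - log (-log x)`, with denominators cleared. -/
lemma one_add_log_mul_sq_le {x : ℝ} (hx : x ∈ Set.Ioo (0 : ℝ) 1) :
    (1 + Real.log x) * (1 - x) ^ 2 ≤ (x * Real.log x) ^ 2 := by
  obtain ⟨h0, h1⟩ := hx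
  by_cases hL : 1 + Real.log x ≤ 0
  · exact (mul_nonpos_of_nonpos_of_nonneg hL (sq_nonneg _)).trans (sq_nonneg _)
  have key : 2 * (1 - x) ≤ -Real.log x * (1 + x) := by
    have h := Real.le_log_one_add_of_nonneg (x := x⁻¹ - 1)
      (sub_nonneg.2 ((one_le_inv₀ h0).2 h1.le))
    rw [add_sub_cancel, Real.log_inv] at h
    have e : 2 * (x⁻¹ - 1) / (x⁻¹ - 1 + 2) = 2 * (1 - x) / (1 + x) := by
      have : x⁻¹ - 1 + 2 = (1 + x) / x := by field_simp; ring
      rw [this]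
      field_simp
    rwa [e, div_le_iff₀ (by linarith)] at h
  have hlin : (1 - x) * (2 + Real.log x) ≤ 2 * (x * -Real.log x) := by linarith
  have hsq : ((1 - x) * (2 + Real.log x)) ^ 2 ≤ (2 * (x * -Real.log x)) ^ 2 :=
    pow_le_pow_left₀ (mul_nonneg (by linarith) (by linarith)) hlin 2
  nlinarith [sq_nonneg (Real.log x * (1 - x))]

lemma concaveOn_log_one_sub_sub_log_neg_log :
    ConcaveOn ℝ (Set.Ioo (0 : ℝ) 1) (fun x => Real.log (1 - x) - Real.log (-Real.log x)) := by
  have hd : ∀ x ∈ Set.Ioo (0 : ℝ) 1,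
      HasDerivAt (fun x => Real.log (1 - x) - Real.log (-Real.log x))
        (-(1 - x)⁻¹ - (x * Real.log x)⁻¹) x := by
    intro x hx
    have hL := Real.log_neg hx.1 hx.2
    have h1 : 1 - x ≠ 0 := (sub_pos.2 hx.2).ne'
    refine HasDerivAt.congr_deriv ((((hasDerivAt_id' x).const_sub 1).log h1).sub
      (((Real.hasDerivAt_log hx.1.ne').neg).log (neg_pos.2 hL).ne')) ?_
    have := hx.1.ne'
    have := hL.ne
    simp only [Pi.neg_apply]
    field_simp
  refine concaveOn_of_hasDerivWithinAt2_nonpos (convex_Ioo 0 1)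
    (f' := fun x => -(1 - x)⁻¹ - (x * Real.log x)⁻¹)
    (f'' := fun x => (1 + Real.log x) / (x * Real.log x) ^ 2 - 1 / (1 - x) ^ 2)
    (fun x hx => (hd x hx).continuousAt.continuousWithinAt) ?_ ?_ ?_ <;>
    rw [interior_Ioo] <;> intro x hx
  · exact (hd x hx).hasDerivWithinAt
  · have hL := Real.log_neg hx.1 hx.2
    have h1 : 1 - x ≠ 0 := (sub_pos.2 hx.2).ne'
    refine HasDerivAt.hasDerivWithinAt (HasDerivAt.congr_deriv
      ((((hasDerivAt_id' x).const_sub 1).inv h1).neg.sub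
        (((hasDerivAt_id' x).mul (Real.hasDerivAt_log hx.1.ne')).inv
          (mul_ne_zero hx.1.ne' hL.ne))) ?_)
    have := hx.1.ne'
    have := hL.ne
    simp only [Pi.mul_apply]
    field_simp
    ring
  · have hL := Real.log_neg hx.1 hx.2
    have h1 : 0 < 1 - x := sub_pos.2 hx.2
    have h2 : 0 < (x * Real.log x) ^ 2 := sq_pos_of_ne_zero (mul_ne_zero hx.1.ne' hL.ne)
    rw [sub_nonpos, div_le_div_iff₀ h2 (by positivity), one_mul]
    exact one_add_log_mul_sq_le hx

/-- The Jensen-type inequality (eqn:app_jens) in the paper's proof of Lemma 7. -/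
theorem jensen_log_one_sub_sub_log_neg_log
    {Y : Type*} [Fintype Y] [Nonempty Y]
    (p : Y → ℝ) (hp : ∀ y, 0 ≤ p y) (hps : ∑ y, p y = 1)
    (f : Y → ℝ) (hf : ∀ y, f y ∈ Set.Ioo (0 : ℝ) 1) :
    ∑ y, p y * (Real.log (1 - f y) - Real.log (-Real.log (f y)))
      ≤ Real.log (1 - ∑ y, p y * f y)
          - Real.log (-Real.log (∑ y, p y * f y)) := by
  simpa only [smul_eq_mul] using concaveOn_log_one_sub_sub_log_neg_log.le_map_sum
    (t := Finset.univ) (fun y _ => hp y) hps (fun y _ => hf y)
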